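/- arXiv:1407.5255 — 2 statements merged into one kernel-verified Lean document; each statement's English description precedes it below -/
import Mathlib

section
/- For all integers p ≥ q ≥ 3 and k ≥ 0, the characteristic polynomial of the Laplacian matrix of the dumbbell graph D_{p,k,q} evaluated at 4 satisfies det(4·I − L(D_{p,k,q})) = 4pqk − 2p(2k+1)(1−(−1)^q) − 2q(2k+1)(1−(−1)^p) + 4(k+1)(1−(−1)^p)(1−(−1)^q). -/
/-! Write `p = m + 1` and `q = n + 1`. Deleting the two degree-3 vertices (the hubs) of the dumbbell
graph leaves three disjoint paths, with `m`, `n` and `k` vertices. On each of them `4·I − L` is the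
tridiagonal matrix with `2` on and `1` beside the diagonal, whose determinant is one more than its
size (`det_pathMat`). By the Schur complement formula (`det_schur`), the determinant sought is
`p q (k + 1)` times that of a `2 × 2` matrix indexed by the hubs.

The Schur complement requires solving linear systems in which the right-hand side is supported at
the ends of the paths. The recurrence `g x + 2 g (x+1) + g (x+2) = 0` has the solutions
`(-1)^x (s + t x)`, and `pathMat_altLin` shows that prescribing their values at the two hubs bounding
a path gives the required solution. Collecting the entries (`schur_eq`) and expanding the `2 × 2`
determinant yields the formula after a case distinction on the parities of `m`, `n` and `k`. -/

open Polynomial Matrix SimpleGraph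
open scoped Classical

/-- The matrix `U_n`: tridiagonal, 2 on the diagonal, -1 on the sub/super-diagonal. -/
def Umatrix (R : Type*) [Ring R] (n : ℕ) : Matrix (Fin n) (Fin n) R :=
  Matrix.of fun i j =>
    if (i : ℕ) = (j : ℕ) then 2
    else if (i : ℕ) + 1 = (j : ℕ) ∨ (j : ℕ) + 1 = (i : ℕ) then -1 else 0

/-- Auxiliary relation for the dumbbell graph `D_{p,k,q}` on vertices `0,…,p+q+k-1`:
vertices `0,…,p-1` form the cycle `C_p`, vertices `p,…,p+q-1` form the cycle `C_q`, and
vertices `p+q,…,p+q+k-1` are the internal vertices of the connecting path (in order),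
with vertex `0` of `C_p` and vertex `p` of `C_q` being its endpoints. -/
def dumbbellRel (p k q : ℕ) (a b : ℕ) : Prop :=
  (b = a + 1 ∧ b < p) ∨
  (a = 0 ∧ b = p - 1) ∨
  (p ≤ a ∧ b = a + 1 ∧ b < p + q) ∨
  (a = p ∧ b = p + q - 1) ∨
  (p + q ≤ a ∧ b = a + 1 ∧ b < p + q + k) ∨
  (if k = 0 then a = 0 ∧ b = p
   else (a = 0 ∧ b = p + q) ∨ (a = p ∧ b = p + q + k - 1))

/-- The dumbbell graph `D_{p,k,q}` on `p + q + k` vertices. -/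
def dumbbellGraph (p k q : ℕ) : SimpleGraph (Fin (p + q + k)) :=
  SimpleGraph.fromRel (fun a b => dumbbellRel p k q (a : ℕ) (b : ℕ))

/-- One path of a theta graph: endpoints `0` and `v`, with `m` internal vertices
`L, L+1, …, L+m-1` (in order); if `m = 0` the path is the single edge `0v`. -/
def thetaBlockRel (v L m : ℕ) (a b : ℕ) : Prop :=
  if m = 0 then a = 0 ∧ b = v
  else (a = 0 ∧ b = L) ∨ (L ≤ a ∧ b = a + 1 ∧ b < L + m) ∨ (a = L + m - 1 ∧ b = v)

/-- The theta graph `Θ_{r,s,t}` on `r + s + t + 2` vertices: the degree-3 vertices are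
`u = 0` and `v = r+s+t+1`, joined by three internally disjoint paths with `r`, `s`, `t`
internal vertices respectively. -/
def thetaGraph (r s t : ℕ) : SimpleGraph (Fin (r + s + t + 2)) :=
  SimpleGraph.fromRel (fun a b =>
    thetaBlockRel (r + s + t + 1) 1 r (a : ℕ) (b : ℕ) ∨
    thetaBlockRel (r + s + t + 1) (r + 1) s (a : ℕ) (b : ℕ) ∨
    thetaBlockRel (r + s + t + 1) (r + s + 1) t (a : ℕ) (b : ℕ))

/-- The matrix `L_{q,k}`: the principal submatrix of the Laplacian matrix of a dumbbell
graph `D_{p,k,q}` obtained by deleting the rows and columns of the `p` vertices of `C_p`.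
Indices `0,…,k-1` are the path vertices `u_1,…,u_k` and indices `k,…,k+q-1` are the cycle
vertices `w_1,…,w_q`. -/
def dumbbellMinor (R : Type*) [Ring R] (q k : ℕ) : Matrix (Fin (q + k)) (Fin (q + k)) R :=
  Matrix.of fun a b =>
    if (a : ℕ) = (b : ℕ) then (if (a : ℕ) = k then 3 else 2)
    else if (a : ℕ) + 1 = (b : ℕ) ∨ (b : ℕ) + 1 = (a : ℕ) ∨
            ((a : ℕ) = k ∧ (b : ℕ) = k + q - 1) ∨ ((a : ℕ) = k + q - 1 ∧ (b : ℕ) = k)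
    then -1 else 0

/-- The matrix `θ_{r,s,t}`: the principal submatrix of the Laplacian matrix of the theta
graph `Θ_{r,s,t}` obtained by deleting the row and column of the degree-3 vertex `u = 0`. -/
noncomputable def thetaMinor (r s t : ℕ) :
    Matrix (Fin (r + s + t + 1)) (Fin (r + s + t + 1)) ℚ :=
  ((thetaGraph r s t).lapMatrix ℚ).submatrix (fun i => i.succ) (fun i => i.succ)

/-- The number of spanning trees of a graph. -/
noncomputable def spanningTreeCount {V : Type*} (G : SimpleGraph V) : ℕ :=
  Nat.card {H : G.Subgraph // H.verts = Set.univ ∧ H.coe.IsTree}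

/-! ### Schur complements and alternating-linear vectors on a path -/

/-- Schur complement in a form that needs no inverse of `D`: a solution `Y` of `D * Y = C`
suffices. -/
theorem det_schur {ι κ : Type*} [Fintype ι] [Fintype κ] [DecidableEq ι] [DecidableEq κ]
    (A : Matrix ι ι ℚ) (B : Matrix ι κ ℚ) (C : Matrix κ ι ℚ) (D : Matrix κ κ ℚ)
    (Y : Matrix κ ι ℚ) (h : D * Y = C) :
    (fromBlocks A B C D).det = (A - B * Y).det * D.det := by
  have h1 : fromBlocks A B C D * fromBlocks 1 0 (-Y) 1 = fromBlocks (A - B * Y) B 0 D := by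
    simp [fromBlocks_multiply, h, sub_eq_add_neg]
  have h2 := congrArg det h1
  rwa [det_mul, det_fromBlocks_zero₁₂, det_one, det_one, mul_one, mul_one,
    det_fromBlocks_zero₂₁] at h2

theorem sum_fin_ite (n a : ℕ) (F : ℕ → ℚ) :
    ∑ j : Fin n, (if (j : ℕ) = a then F j else 0) = if a < n then F a else 0 := by
  rw [Fin.sum_univ_eq_sum_range (fun j => if j = a then F j else 0) n]
  simp [Finset.sum_ite_eq']

/-- The block of `4·I − L` on `n` consecutive degree-2 vertices of a path: tridiagonal, with `2` on
the diagonal and `1` beside it. -/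
def pathMat (n : ℕ) : Matrix (Fin n) (Fin n) ℚ :=
  Matrix.of fun i j =>
    if (i : ℕ) = j then 2 else if (i : ℕ) + 1 = j ∨ (j : ℕ) + 1 = i then 1 else 0

/-- The alternating-linear sequence `(-1)^x (s + t x)`; these are exactly the solutions of
`g x + 2 g (x+1) + g (x+2) = 0`. -/
def altLin (s t : ℚ) (x : ℕ) : ℚ := (-1) ^ x * (s + t * x)

/-- `pathMat n` maps an alternating-linear vector, placed at positions `1, …, n`, to minus its
boundary values at `0` and `n + 1`. Prescribing these two values therefore solves linear systems
whose right-hand side is supported at the ends of the path. -/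
theorem pathMat_altLin (n : ℕ) (s t : ℚ) (i : Fin n) :
    ∑ j : Fin n, pathMat n i j * altLin s t (j + 1) =
      -(if (i : ℕ) = 0 then altLin s t 0 else 0)
        - (if (i : ℕ) + 1 = n then altLin s t (n + 1) else 0) := by
  have hsplit : ∀ j : Fin n, pathMat n i j * altLin s t (j + 1) =
      (if (j : ℕ) = i then 2 * altLin s t (j + 1) else 0)
      + (if (j : ℕ) = i + 1 then altLin s t (j + 1) else 0)
      + (if (i : ℕ) = 0 then 0 else if (j : ℕ) = i - 1 then altLin s t (j + 1) else 0) := by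
    intro j
    simp only [pathMat, of_apply]
    split_ifs <;> first | omega | ring
  rw [Finset.sum_congr rfl (fun j _ => hsplit j), Finset.sum_add_distrib, Finset.sum_add_distrib,
    sum_fin_ite n i (fun j => 2 * altLin s t (j + 1)),
    sum_fin_ite n (i + 1) (fun j => altLin s t (j + 1))]
  have hthird : ∑ j : Fin n, (if (i : ℕ) = 0 then 0 else
        if (j : ℕ) = i - 1 then altLin s t (j + 1) else 0)
      = if (i : ℕ) = 0 then 0 else altLin s t i := by
    split_ifs with h0
    · simp
    · rw [sum_fin_ite n (i - 1) (fun j => altLin s t (j + 1)), if_pos (by omega)]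
      congr 1; omega
  have hrec : altLin s t i + 2 * altLin s t (i + 1) + altLin s t (i + 1 + 1) = 0 := by
    simp only [altLin, pow_succ]; push_cast; ring
  rw [hthird, if_pos i.isLt]
  by_cases h0 : (i : ℕ) = 0 <;> by_cases h1 : (i : ℕ) + 1 = n
  · rw [if_neg (by omega), if_pos h0, if_pos h0, if_pos h1,
      show altLin s t (n + 1) = altLin s t (i + 1 + 1) by rw [h1]]
    rw [h0] at hrec ⊢; linarith
  · rw [if_pos (by omega), if_pos h0, if_pos h0, if_neg h1]
    rw [h0] at hrec ⊢; linarith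
  · rw [if_neg (by omega), if_neg h0, if_neg h0, if_pos h1,
      show altLin s t (n + 1) = altLin s t (i + 1 + 1) by rw [h1]]
    linarith
  · rw [if_pos (by omega), if_neg h0, if_neg h0, if_neg h1]
    linarith

theorem neg_one_pow_sq (n : ℕ) : ((-1 : ℚ) ^ n) * (-1) ^ n = 1 := by
  rw [← mul_pow]; simp

/-- By induction: the Schur complement of `pathMat n` in `pathMat (n + 1)` is the scalar
`2 - n / (n + 1)`. -/
theorem det_pathMat (n : ℕ) : (pathMat n).det = n + 1 := by
  induction n with
  | zero => simp
  | succ n ih =>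
    have hn : (n : ℚ) + 1 ≠ 0 := by positivity
    rw [← det_submatrix_equiv_self
      ((Equiv.sumComm _ _).trans finSumFinEquiv : Fin 1 ⊕ Fin n ≃ Fin (n + 1))]
    have hb : (pathMat (n + 1)).submatrix
          ((Equiv.sumComm _ _).trans finSumFinEquiv : Fin 1 ⊕ Fin n ≃ Fin (n + 1))
          ((Equiv.sumComm _ _).trans finSumFinEquiv : Fin 1 ⊕ Fin n ≃ Fin (n + 1)) =
        fromBlocks (of fun (_ _ : Fin 1) => (2 : ℚ))
          (of fun (_ : Fin 1) (j : Fin n) => if (j : ℕ) + 1 = n then (1 : ℚ) else 0)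
          (of fun (i : Fin n) (_ : Fin 1) => if (i : ℕ) + 1 = n then (1 : ℚ) else 0) (pathMat n) := by
      ext x y
      rcases x with x | x <;> rcases y with y | y <;>
        simp [pathMat] <;> (try split_ifs) <;> first | rfl | omega
    -- The sequence with boundary values `0` at `0` and `-1` at `n + 1`.
    rw [hb, det_schur _ _ _ _ (of fun (i : Fin n) _ => altLin 0 ((-1) ^ n / (n + 1)) (i + 1)), ih,
      det_unique]
    · have : ∀ j : Fin n, (if (j : ℕ) + 1 = n then (1 : ℚ) else 0) *
          altLin 0 ((-1) ^ n / (n + 1)) (j + 1) =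
          if (j : ℕ) = n - 1 then altLin 0 ((-1) ^ n / (n + 1)) (j + 1) else 0 := by
        intro j; split_ifs <;> first | omega | simp
      simp only [Matrix.sub_apply, mul_apply, of_apply, this]
      rw [sum_fin_ite n (n - 1) (fun j => altLin 0 ((-1) ^ n / (n + 1)) (j + 1))]
      have hval : (if n - 1 < n then altLin 0 ((-1) ^ n / (n + 1)) (n - 1 + 1) else 0)
          = n / ((n : ℚ) + 1) := by
        rcases n with _ | n
        · simp
        · rw [if_pos (by omega)]
          simp only [altLin, Nat.add_sub_cancel]
          rw [zero_add, div_mul_eq_mul_div, mul_div_assoc', ← mul_assoc, neg_one_pow_sq, one_mul]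
      rw [hval]; push_cast; field_simp; ring
    · ext i j
      simp only [mul_apply, of_apply]
      rw [pathMat_altLin]
      have e0 : altLin 0 ((-1) ^ n / (n + 1)) 0 = 0 := by simp [altLin]
      have e1 : altLin 0 ((-1) ^ n / (n + 1)) (n + 1) = -1 := by
        simp only [altLin]; push_cast
        rw [zero_add, div_mul_cancel₀ _ hn, pow_succ]
        linear_combination -neg_one_pow_sq n
      rw [e0, e1]; split_ifs <;> simp

/-! ### The dumbbell graph in block form -/

/-- The vertices of the dumbbell graph `D_{m+1,k,n+1}`, sorted into the two hubs (the degree-3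
vertices `0` and `m + 1`) and the three paths left when the hubs are deleted: the rest of the first
cycle, the rest of the second cycle, and the interior of the connecting path. -/
def vertexFun (m n k : ℕ) :
    Fin 2 ⊕ (Fin m ⊕ (Fin n ⊕ Fin k)) → Fin ((m + 1) + (n + 1) + k)
  | .inl s => ⟨s * (m + 1), by
      have := s.isLt
      have : (s : ℕ) = 0 ∨ (s : ℕ) = 1 := by omega
      rcases this with h | h <;> rw [h] <;> omega⟩
  | .inr (.inl i) => ⟨i + 1, by omega⟩
  | .inr (.inr (.inl j)) => ⟨m + 2 + j, by omega⟩
  | .inr (.inr (.inr l)) => ⟨m + n + 2 + l, by omega⟩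

theorem vertexFun_bijective (m n k : ℕ) : Function.Bijective (vertexFun m n k) := by
  rw [Fintype.bijective_iff_injective_and_card]
  constructor
  · rintro (x | x | x | x) (y | y | y | y) h <;>
      (try fin_cases x) <;> (try fin_cases y) <;> simp [vertexFun, Fin.ext_iff] at h ⊢ <;> omega
  · simp; omega

theorem degree_eq_two {N : ℕ} (G : SimpleGraph (Fin N)) (v : Fin N) (a b : ℕ) (ha : a < N)
    (hb : b < N) (hab : a ≠ b) (h : ∀ w, G.Adj v w ↔ ((w : ℕ) = a ∨ (w : ℕ) = b)) :
    G.degree v = 2 := by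
  have : G.neighborFinset v = {⟨a, ha⟩, ⟨b, hb⟩} := by
    ext w; simp [h, Fin.ext_iff]
  rw [← card_neighborFinset_eq_degree, this, Finset.card_pair (by simpa [Fin.ext_iff] using hab)]

theorem degree_eq_three {N : ℕ} (G : SimpleGraph (Fin N)) (v : Fin N) (a b c : ℕ) (ha : a < N)
    (hb : b < N) (hc : c < N) (hab : a ≠ b) (hac : a ≠ c) (hbc : b ≠ c)
    (h : ∀ w, G.Adj v w ↔ ((w : ℕ) = a ∨ (w : ℕ) = b ∨ (w : ℕ) = c)) :
    G.degree v = 3 := by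
  have : G.neighborFinset v = {⟨a, ha⟩, ⟨b, hb⟩, ⟨c, hc⟩} := by
    ext w; simp [h, Fin.ext_iff]
  rw [← card_neighborFinset_eq_degree, this, Finset.card_eq_three]
  exact ⟨_, _, _, by simpa [Fin.ext_iff] using hab, by simpa [Fin.ext_iff] using hac,
    by simpa [Fin.ext_iff] using hbc, rfl⟩

/-- The two hubs have degree 3, all other vertices degree 2. -/
theorem degree_dumbbell (p k q : ℕ) (hp : 3 ≤ p) (hq : 3 ≤ q) (v : Fin (p + q + k)) :
    (dumbbellGraph p k q).degree v = if (v : ℕ) = 0 ∨ (v : ℕ) = p then 3 else 2 := by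
  obtain ⟨v, hv⟩ := v
  have hadj : ∀ w : Fin (p + q + k), (dumbbellGraph p k q).Adj ⟨v, hv⟩ w ↔
      (v ≠ w ∧ (dumbbellRel p k q v w ∨ dumbbellRel p k q w v)) := by
    intro w; simp [dumbbellGraph, Fin.ext_iff]
  by_cases h0 : v = 0
  · rw [if_pos (Or.inl h0)]
    refine degree_eq_three _ _ 1 (p - 1) (if k = 0 then p else p + q) ?_ ?_ ?_ ?_ ?_ ?_
      fun w => ?_
    any_goals (split_ifs <;> omega)
    any_goals omega
    rw [hadj]; have := w.isLt; unfold dumbbellRel; grind (splits := 30)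
  by_cases h1 : v = p
  · rw [if_pos (Or.inr h1)]
    refine degree_eq_three _ _ (p + 1) (p + q - 1) (if k = 0 then 0 else p + q + k - 1)
      ?_ ?_ ?_ ?_ ?_ ?_ fun w => ?_
    any_goals (split_ifs <;> omega)
    any_goals omega
    rw [hadj]; have := w.isLt; unfold dumbbellRel; grind (splits := 30)
  rw [if_neg (by simp [h0, h1])]
  by_cases h2 : v < p
  · refine degree_eq_two _ _ (v - 1) (if v = p - 1 then 0 else v + 1) ?_ ?_ ?_ fun w => ?_
    any_goals (split_ifs <;> omega)
    any_goals omega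
    rw [hadj]; have := w.isLt; unfold dumbbellRel; grind (splits := 30)
  by_cases h3 : v < p + q
  · refine degree_eq_two _ _ (v - 1) (if v = p + q - 1 then p else v + 1) ?_ ?_ ?_ fun w => ?_
    any_goals (split_ifs <;> omega)
    any_goals omega
    rw [hadj]; have := w.isLt; unfold dumbbellRel; grind (splits := 30)
  · refine degree_eq_two _ _ (if v = p + q then 0 else v - 1)
      (if v = p + q + k - 1 then p else v + 1) ?_ ?_ ?_ fun w => ?_
    any_goals (split_ifs <;> omega)
    rw [hadj]; have := w.isLt; unfold dumbbellRel; grind (splits := 30)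

theorem four_sub_lapMatrix_apply (p k q : ℕ) (hp : 3 ≤ p) (hq : 3 ≤ q) (v w : Fin (p + q + k)) :
    ((4 : ℚ) • (1 : Matrix (Fin (p + q + k)) (Fin (p + q + k)) ℚ) -
        (dumbbellGraph p k q).lapMatrix ℚ) v w =
      if (v : ℕ) = w then (if (v : ℕ) = 0 ∨ (v : ℕ) = p then 1 else 2)
      else if dumbbellRel p k q v w ∨ dumbbellRel p k q w v then 1 else 0 := by
  by_cases h : v = w
  · subst h
    simp only [lapMatrix, degMatrix, Matrix.sub_apply, Matrix.smul_apply, one_apply_eq, diagonal_apply_eq,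
      adjMatrix_apply, SimpleGraph.irrefl, if_false, if_true, degree_dumbbell p k q hp hq]
    split_ifs <;> norm_num
  · have h' : (v : ℕ) ≠ w := fun e => h (Fin.ext e)
    have hadj : (dumbbellGraph p k q).Adj v w ↔
        (dumbbellRel p k q v w ∨ dumbbellRel p k q w v) := by
      simp [dumbbellGraph, h]
    simp [lapMatrix, degMatrix, h, h', adjMatrix_apply, hadj]

/-- Indicator of the two end positions `0` and `n - 1` of a path on `n` vertices. -/
def ends (n : ℕ) (j : ℕ) : ℚ := if j = 0 ∨ j + 1 = n then 1 else 0

/-- Adjacency between the interior vertices (rows) and the two hubs (columns). -/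
def conn (m n k : ℕ) : Matrix (Fin m ⊕ (Fin n ⊕ Fin k)) (Fin 2) ℚ :=
  fromRows (of fun i => ![ends m i, 0]) (fromRows (of fun j => ![0, ends n j])
    (of fun l => ![if (l : ℕ) = 0 then 1 else 0, if (l : ℕ) + 1 = k then 1 else 0]))

/-- The block of `4·I − L` on the two hubs, which are adjacent precisely when `k = 0`. -/
def hub (k : ℕ) : Matrix (Fin 2) (Fin 2) ℚ :=
  !![1, if k = 0 then 1 else 0; if k = 0 then 1 else 0, 1]

theorem submatrix_vertexFun (m n k : ℕ) (hm : 2 ≤ m) (hn : 2 ≤ n) :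
    ((4 : ℚ) • (1 : Matrix (Fin ((m + 1) + (n + 1) + k)) (Fin ((m + 1) + (n + 1) + k)) ℚ) -
        (dumbbellGraph (m + 1) k (n + 1)).lapMatrix ℚ).submatrix
          (vertexFun m n k) (vertexFun m n k) =
      fromBlocks (hub k) (conn m n k)ᵀ (conn m n k)
        (fromBlocks (pathMat m) 0 0 (fromBlocks (pathMat n) 0 0 (pathMat k))) := by
  ext x y
  rw [submatrix_apply, four_sub_lapMatrix_apply _ _ _ (by omega) (by omega)]
  unfold dumbbellRel
  rcases x with x | x | x | x <;> rcases y with y | y | y | y <;>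
    (have hx := x.isLt) <;> (have hy := y.isLt) <;>
    (try fin_cases x) <;> (try fin_cases y) <;>
    simp [vertexFun, hub, conn, pathMat, ends] <;> grind


/-! ### The Schur complement on the two hubs -/

theorem ends_mul_altLin (m : ℕ) (hm : 2 ≤ m) (s t : ℚ) :
    ∑ i : Fin m, ends m i * altLin s t (i + 1) = altLin s t 1 + altLin s t m := by
  have h : ∀ i : Fin m, ends m i * altLin s t (i + 1) =
      (if (i : ℕ) = 0 then altLin s t (i + 1) else 0)
        + (if (i : ℕ) = m - 1 then altLin s t (i + 1) else 0) := by
    intro i; unfold ends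
    split_ifs <;> first | omega | ring
  rw [Finset.sum_congr rfl (fun i _ => h i), Finset.sum_add_distrib,
    sum_fin_ite m 0 (fun i => altLin s t (i + 1)),
    sum_fin_ite m (m - 1) (fun i => altLin s t (i + 1)), if_pos (by omega), if_pos (by omega),
    Nat.sub_add_cancel (by omega)]

/-- The empty path `k = 0` has no first vertex, hence the case distinction. -/
theorem first_mul_altLin (k : ℕ) (s t : ℚ) :
    ∑ l : Fin k, (if (l : ℕ) = 0 then 1 else 0) * altLin s t (l + 1) =
      if k = 0 then 0 else altLin s t 1 := by
  simp only [ite_mul, one_mul, zero_mul]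
  rw [sum_fin_ite k 0 (fun i => altLin s t (i + 1))]
  split_ifs <;> first | omega | rfl

/-- The empty path `k = 0` has no last vertex, hence the case distinction. -/
theorem last_mul_altLin (k : ℕ) (s t : ℚ) :
    ∑ l : Fin k, (if (l : ℕ) + 1 = k then 1 else 0) * altLin s t (l + 1) =
      if k = 0 then 0 else altLin s t k := by
  have h : ∀ l : Fin k, (if (l : ℕ) + 1 = k then 1 else 0) * altLin s t (l + 1) =
      if (l : ℕ) = k - 1 then altLin s t (l + 1) else 0 := by
    intro l; split_ifs <;> first | omega | ring
  rw [Finset.sum_congr rfl (fun i _ => h i), sum_fin_ite k (k - 1) (fun i => altLin s t (i + 1))]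
  split_ifs
  · omega
  · rw [Nat.sub_add_cancel (by omega)]
  · rfl
  · omega

/-- The `t` for which `altLin (-1) t` takes the value `-1` at both `0` and `m + 1`, the two positions
of the hub when the cycle `C_{m+1}` is cut open there. -/
def cycleSlope (m : ℕ) : ℚ := (1 + (-1) ^ m) / (m + 1)

/-- The solution `Y` of `D * Y = conn`, `D` being the interior block. Column `s` is alternating-linear
on each of the three paths, with boundary value `-1` wherever the path meets hub `s` and `0` where it
meets the other hub. -/
def corr (m n k : ℕ) : Matrix (Fin m ⊕ (Fin n ⊕ Fin k)) (Fin 2) ℚ :=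
  fromRows (of fun i => ![altLin (-1) (cycleSlope m) (i + 1), 0])
    (fromRows (of fun j => ![0, altLin (-1) (cycleSlope n) (j + 1)])
      (of fun l => ![altLin (-1) (1 / (k + 1)) (l + 1), altLin 0 ((-1) ^ k / (k + 1)) (l + 1)]))

theorem pathMat_cycle (m : ℕ) (hm : 2 ≤ m) (i : Fin m) :
    ∑ j : Fin m, pathMat m i j * altLin (-1) (cycleSlope m) (j + 1) = ends m i := by
  have e0 : altLin (-1) (cycleSlope m) 0 = -1 := by simp [altLin]
  have e1 : altLin (-1) (cycleSlope m) (m + 1) = -1 := by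
    have hn : (m : ℚ) + 1 ≠ 0 := by positivity
    simp only [altLin, cycleSlope]; push_cast
    rw [div_mul_cancel₀ _ hn, pow_succ]
    linear_combination -neg_one_pow_sq m
  rw [pathMat_altLin, e0, e1]; unfold ends
  split_ifs <;> first | omega | norm_num

theorem interior_mul_corr (m n k : ℕ) (hm : 2 ≤ m) (hn : 2 ≤ n) :
    fromBlocks (pathMat m) 0 0 (fromBlocks (pathMat n) 0 0 (pathMat k)) * corr m n k =
      conn m n k := by
  have hk : (k : ℚ) + 1 ≠ 0 := by positivity
  unfold corr conn
  simp only [fromBlocks_mul_fromRows, Matrix.zero_mul, add_zero, zero_add]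
  congr 1
  · ext i s
    fin_cases s <;> simp [mul_apply, pathMat_cycle m hm]
  congr 1
  · ext i s
    fin_cases s <;> simp [mul_apply, pathMat_cycle n hn]
  · ext i s
    fin_cases s
    · have e0 : altLin (-1) (1 / (k + 1)) 0 = -1 := by simp [altLin]
      have e1 : altLin (-1) (1 / (k + 1)) (k + 1) = 0 := by
        simp only [altLin]; push_cast; rw [div_mul_cancel₀ _ hk]; ring
      simp only [mul_apply, of_apply, Fin.zero_eta, cons_val_zero]
      rw [pathMat_altLin, e0, e1]
      split_ifs <;> norm_num
    · have e0 : altLin 0 ((-1) ^ k / (k + 1)) 0 = 0 := by simp [altLin]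
      have e1 : altLin 0 ((-1) ^ k / (k + 1)) (k + 1) = -1 := by
        simp only [altLin]; push_cast
        rw [zero_add, div_mul_cancel₀ _ hk, pow_succ]
        linear_combination -neg_one_pow_sq k
      simp only [mul_apply, of_apply, Fin.mk_one, cons_val_one, cons_val_fin_one]
      rw [pathMat_altLin, e0, e1]
      split_ifs <;> norm_num

/-- Diagonal entry of the Schur complement at the hub of the cycle `C_{m+1}`. -/
def hubDiag (m k : ℕ) : ℚ :=
  1 - (altLin (-1) (cycleSlope m) 1 + altLin (-1) (cycleSlope m) m) - k / (k + 1)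

/-- For `k ≥ 1` the off-diagonal entry comes from the connecting path; for `k = 0` it comes from the
edge between the hubs, and the same formula holds. -/
theorem schur_eq (m n k : ℕ) (hm : 2 ≤ m) (hn : 2 ≤ n) :
    hub k - (conn m n k)ᵀ * corr m n k =
      !![hubDiag m k, (-1) ^ k / (k + 1); (-1) ^ k / (k + 1), hubDiag n k] := by
  have hk : (k : ℚ) + 1 ≠ 0 := by positivity
  unfold conn corr
  simp only [transpose_fromRows, fromCols_mul_fromRows]
  ext a b
  fin_cases a <;> fin_cases b <;>
    simp only [hub, Matrix.sub_apply, Matrix.add_apply, mul_apply, transpose_apply, of_apply,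
      Fin.zero_eta, Fin.mk_one, cons_val_zero, cons_val_one, cons_val_fin_one, zero_mul, mul_zero,
      Finset.sum_const_zero, zero_add, ends_mul_altLin m hm, ends_mul_altLin n hn,
      first_mul_altLin, last_mul_altLin, hubDiag] <;>
    rcases eq_or_ne k 0 with rfl | h0
  all_goals first | simp; done | skip
  all_goals
    simp only [if_neg h0, altLin, pow_one]
    push_cast
    rcases neg_one_pow_eq_or ℚ k with e | e <;> (try rw [e]) <;> field_simp <;> ring

theorem det_dumbbell_aux (m n k : ℕ) (hm : 2 ≤ m) (hn : 2 ≤ n) :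
    ((4 : ℚ) • (1 : Matrix (Fin ((m + 1) + (n + 1) + k)) (Fin ((m + 1) + (n + 1) + k)) ℚ) -
        (dumbbellGraph (m + 1) k (n + 1)).lapMatrix ℚ).det =
      (hubDiag m k * hubDiag n k - (-1) ^ k / (k + 1) * ((-1) ^ k / (k + 1))) *
        ((m + 1) * ((n + 1) * (k + 1))) := by
  rw [← det_submatrix_equiv_self (Equiv.ofBijective _ (vertexFun_bijective m n k))]
  rw [Equiv.coe_ofBijective, submatrix_vertexFun m n k hm hn,
    det_schur _ _ _ _ _ (interior_mul_corr m n k hm hn), schur_eq m n k hm hn, det_fin_two_of,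
    det_fromBlocks_zero₂₁, det_fromBlocks_zero₂₁, det_pathMat, det_pathMat, det_pathMat]

/-- `det(4·I − L(D_{p,k,q})) = 4pqk − 2p(2k+1)(1−(−1)^q) − 2q(2k+1)(1−(−1)^p)
+ 4(k+1)(1−(−1)^p)(1−(−1)^q)`. -/
theorem det_four_sub_lapMatrix_dumbbell (p k q : ℕ) (hq : 3 ≤ q) (hqp : q ≤ p) :
    ((4 : ℚ) • (1 : Matrix (Fin (p + q + k)) (Fin (p + q + k)) ℚ) -
        (dumbbellGraph p k q).lapMatrix ℚ).det =
      4 * p * q * k - 2 * p * (2 * k + 1) * (1 - (-1 : ℚ) ^ q)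
        - 2 * q * (2 * k + 1) * (1 - (-1 : ℚ) ^ p)
        + 4 * (k + 1) * (1 - (-1 : ℚ) ^ p) * (1 - (-1 : ℚ) ^ q) := by
  obtain ⟨n, rfl⟩ : ∃ n, q = n + 1 := ⟨q - 1, by omega⟩
  obtain ⟨m, rfl⟩ : ∃ m, p = m + 1 := ⟨p - 1, by omega⟩
  rw [det_dumbbell_aux m n k (by omega) (by omega)]
  have hm : (m : ℚ) + 1 ≠ 0 := by positivity
  have hn : (n : ℚ) + 1 ≠ 0 := by positivity
  have hk : (k : ℚ) + 1 ≠ 0 := by positivity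
  simp only [hubDiag, altLin, cycleSlope, pow_succ, pow_zero]
  push_cast
  rcases neg_one_pow_eq_or ℚ m with em | em <;> rcases neg_one_pow_eq_or ℚ n with en | en <;>
    rcases neg_one_pow_eq_or ℚ k with ek | ek <;> rw [em, en, ek] <;> field_simp <;> ring
end

section
/- For all integers r ≥ s ≥ t ≥ 0 with (s,t) ≠ (0,0), the characteristic polynomial of the Laplacian matrix of the theta graph Θ_{r,s,t} evaluated at 4 satisfies det(4·I − L(Θ_{r,s,t})) = 4rst − 2r(1+(−1)^{s+t}) − 2s(1+(−1)^{r+t}) − 2t(1+(−1)^{r+s}) − 2(1+(−1)^{s+t}+(−1)^{r+t}+(−1)^{r+s}). -/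
/-!
Sort the vertices of the theta graph into the internal vertices of the three paths and the two
branch vertices `u`, `v`. In this order `4 - L` is a block matrix `[[A, B], [Bᵀ, D]]`, where `A` is
block diagonal with one tridiagonal matrix per path (`2` on the diagonal, `1` next to it), `B`
records which internal vertices are adjacent to `u` and `v`, and `D` has diagonal `4 - 3 = 1` and
off-diagonal entry `1` exactly when `u` and `v` are joined by an edge
(`four_sub_lapMatrix_thetaGraph`).

The tridiagonal block of size `m` has determinant `m + 1` (`det_pathBlock`, by an LU
factorisation), and the equation `A * X = B` is solved explicitly, path by path
(`pathBlock_mul_pathSol`). The Schur complement formula then gives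
`(r + 1) (s + 1) (t + 1) * det (D - Bᵀ * X)`. The `2 × 2` matrix `D - Bᵀ * X` has diagonal entries
`1 - ∑ m / (m + 1)` and off-diagonal entries `∑ (-1) ^ m / (m + 1)`, the sums being over
`m = r, s, t`: a path with `m = 0` contributes its edge `uv` through `D`, which is just the term
`(-1) ^ 0 / (0 + 1)`. Expanding, with `((-1) ^ m) ^ 2 = 1`, yields the formula.
-/

open Polynomial Matrix SimpleGraph
open scoped Classical

/-! ### The tridiagonal block of a single path -/

/-- The adjacency matrix of the path on `m` vertices. -/
def pathAdj (m : ℕ) : Matrix (Fin m) (Fin m) ℚ :=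
  Matrix.of fun i j => (if (j : ℕ) = i + 1 then 1 else 0) + (if (j : ℕ) + 1 = i then 1 else 0)

/-- The tridiagonal matrix with `2` on the diagonal and `1` next to it: the block of `4 - L`
on the `m` internal vertices of one path. -/
def pathBlock (m : ℕ) : Matrix (Fin m) (Fin m) ℚ := (2 : ℚ) • 1 + pathAdj m

/-- Incidence of the internal vertices of one path with the two branch vertices: column `0` marks
the first internal vertex (the neighbour of `u`), column `1` the last (the neighbour of `v`). -/
def pathEnds (m : ℕ) : Matrix (Fin m) (Fin 2) ℚ :=
  Matrix.of fun i => ![if (i : ℕ) = 0 then 1 else 0, if (i : ℕ) + 1 = m then 1 else 0]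

/-- The explicit solution `Y` of `pathBlock m * Y = pathEnds m`. -/
def pathSol (m : ℕ) : Matrix (Fin m) (Fin 2) ℚ :=
  Matrix.of fun i => ![(-1) ^ (i : ℕ) * ((m : ℚ) - (i : ℕ)) / (m + 1),
    -((-1) ^ (m + i : ℕ) * (((i : ℕ) : ℚ) + 1) / (m + 1))]

theorem sum_fin_ite_eq (m k : ℕ) (f : ℕ → ℚ) :
    ∑ j : Fin m, (if (j : ℕ) = k then f j else 0) = if k < m then f k else 0 := by
  rw [Fin.sum_univ_eq_sum_range (fun j => if j = k then f j else 0) m, Finset.sum_ite_eq']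
  simp

theorem sum_fin_ite_succ_eq (m k : ℕ) (hk : k ≤ m) (f : ℕ → ℚ) :
    ∑ j : Fin m, (if (j : ℕ) + 1 = k then f j else 0) = if k = 0 then 0 else f (k - 1) := by
  rcases k with _ | k
  · simp
  · simp only [Nat.add_right_cancel_iff, sum_fin_ite_eq]
    simp [show k < m by omega]

theorem sum_pathAdj_mul (m : ℕ) (f : ℕ → ℚ) (i : Fin m) :
    ∑ j : Fin m, pathAdj m i j * f j =
      (if (i : ℕ) + 1 < m then f (i + 1) else 0) + (if (i : ℕ) = 0 then 0 else f (i - 1)) := by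
  simp only [pathAdj, of_apply, add_mul, ite_mul, one_mul, zero_mul, Finset.sum_add_distrib,
    sum_fin_ite_eq, sum_fin_ite_succ_eq m i i.2.le]

theorem pathBlock_mul_pathSol (m : ℕ) : pathBlock m * pathSol m = pathEnds m := by
  have hm : (m : ℚ) + 1 ≠ 0 := by positivity
  ext i k
  obtain ⟨i, hi⟩ := i
  rw [pathBlock, Matrix.add_mul, Matrix.smul_mul, Matrix.one_mul, Matrix.add_apply,
    Matrix.smul_apply, Matrix.mul_apply, smul_eq_mul]
  fin_cases k
  · have := sum_pathAdj_mul m (fun i => (-1) ^ i * ((m : ℚ) - i) / (m + 1)) ⟨i, hi⟩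
    simp only [pathSol, pathEnds, of_apply, Fin.zero_eta, cons_val_zero] at this ⊢
    rw [this]
    -- the recursion `x (i-1) + 2 x i + x (i+1) = 0`, with the boundary values `x m = 0`, `x (-1) = -1`
    rcases Nat.eq_or_lt_of_le (Nat.succ_le_of_lt hi) with h | h
    · subst h
      rcases i with _ | i <;> simp <;> field_simp <;> ring
    · rw [if_pos h]
      rcases i with _ | i <;> simp <;> field_simp <;> ring
  · have := sum_pathAdj_mul m (fun i => -((-1) ^ (m + i) * ((i : ℚ) + 1) / (m + 1))) ⟨i, hi⟩
    simp only [pathSol, pathEnds, of_apply, Fin.mk_one, cons_val_one, cons_val_zero] at this ⊢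
    rw [this]
    have e (n : ℕ) : (-1 : ℚ) ^ (n * 2) = 1 := by simp
    -- the same recursion, with the boundary values `x (-1) = 0`, `x m = -1`
    rcases Nat.eq_or_lt_of_le (Nat.succ_le_of_lt hi) with h | h
    · subst h
      rcases i with _ | i
      · simp
        field_simp
        ring
      · simp
        field_simp
        ring_nf
        simp only [e]
        ring
    · rw [if_pos h, if_neg h.ne]
      rcases i with _ | i <;> simp <;> field_simp <;> ring

/-- Contribution of one path to `Bᵀ * X`. For `m = 0` there are no internal vertices and the product
is `0`; the off-diagonal formula `-((-1) ^ m / (m + 1))` would give `-1` there. -/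
theorem pathEnds_transpose_mul_pathSol (m : ℕ) : (pathEnds m)ᵀ * pathSol m =
    !![(m : ℚ) / (m + 1), if m = 0 then 0 else -((-1) ^ m / (m + 1));
      if m = 0 then 0 else -((-1) ^ m / (m + 1)), (m : ℚ) / (m + 1)] := by
  have h0 := sum_fin_ite_eq m 0
  have h1 := sum_fin_ite_succ_eq m m le_rfl
  ext i j
  fin_cases i <;> fin_cases j <;>
    simp only [Matrix.mul_apply, transpose_apply, pathEnds, pathSol, of_apply, Fin.zero_eta,
      Fin.mk_one, cons_val_one, cons_val_zero, ite_mul, one_mul, zero_mul]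
  · rw [h0 fun i => (-1) ^ i * ((m : ℚ) - i) / (m + 1)]
    rcases m with _ | m <;> simp
  · rw [h0 fun i => -((-1) ^ (m + i) * ((i : ℚ) + 1) / (m + 1))]
    rcases m with _ | m <;> simp
  · rw [h1 fun i => (-1) ^ i * ((m : ℚ) - i) / (m + 1)]
    rcases m with _ | m <;> simp; ring
  · rw [h1 fun i => -((-1) ^ (m + i) * ((i : ℚ) + 1) / (m + 1))]
    rcases m with _ | m <;> simp
    ring

theorem det_pathBlock (m : ℕ) : (pathBlock m).det = m + 1 := by
  -- Gaussian elimination: a unit lower bidiagonal times an upper bidiagonal matrix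
  let L : Matrix (Fin m) (Fin m) ℚ := Matrix.of fun i j =>
    (if (j : ℕ) = i then 1 else 0) + if (j : ℕ) + 1 = i then ((i : ℕ) : ℚ) / ((i : ℕ) + 1) else 0
  let g : ℕ → ℕ → ℚ := fun i j =>
    (if j = i then ((i : ℚ) + 2) / (i + 1) else 0) + if j = i + 1 then 1 else 0
  let U : Matrix (Fin m) (Fin m) ℚ := Matrix.of fun i j => g i j
  have hLU : pathBlock m = L * U := by
    ext i j
    simp only [Matrix.mul_apply, L, U, of_apply, add_mul, ite_mul, one_mul, zero_mul,
      Finset.sum_add_distrib]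
    rw [sum_fin_ite_eq m i (fun k => g k j), if_pos i.2,
      sum_fin_ite_succ_eq m i i.2.le (fun k => (i : ℕ) / ((i : ℕ) + 1) * g k j)]
    obtain ⟨i, hi⟩ := i
    obtain ⟨j, hj⟩ := j
    simp only [pathBlock, pathAdj, Matrix.add_apply, Matrix.smul_apply, Matrix.one_apply, of_apply,
      Fin.mk.injEq, smul_eq_mul, g]
    have h1 : (i : ℚ) + 1 ≠ 0 := by positivity
    rcases i with _ | i
    · split_ifs <;> first | contradiction | omega | norm_num
    · have h2 : (i : ℚ) + 1 ≠ 0 := by positivity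
      have h3 : (i : ℚ) + 1 + 1 ≠ 0 := by positivity
      push_cast
      split_ifs <;> first | omega | (field_simp; try ring)
  have hL : L.det = 1 := by
    rw [det_of_isLowerTriangular]
    · have h (i : Fin m) : L i i = 1 := by simp [L]
      simp [h]
    · intro i j hij
      have : (i : ℕ) < j := hij
      simp only [L, of_apply]
      rw [if_neg (by omega), if_neg (by omega), add_zero]
  have hU : U.det = m + 1 := by
    rw [det_of_isUpperTriangular]
    · have h (i : Fin m) : U i i = (((i : ℕ) : ℚ) + 2) / ((i : ℕ) + 1) := by simp [U, g]
      simp only [h]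
      rw [Fin.prod_univ_eq_prod_range (fun i : ℕ => ((i : ℚ) + 2) / (i + 1)) m]
      clear h hLU hL L U g
      induction m with
      | zero => simp
      | succ m ih =>
        have : (m : ℚ) + 1 ≠ 0 := by positivity
        rw [Finset.prod_range_succ, ih]
        push_cast
        field_simp
        ring
    · intro i j hij
      have : (j : ℕ) < i := hij
      simp only [U, g, of_apply]
      rw [if_neg (by omega), if_neg (by omega), add_zero]
  rw [hLU, det_mul, hL, hU, one_mul]

/-! ### The theta graph in block form -/

/-- The vertices of a theta graph sorted by their role: the internal vertices of the three paths,
and the two branch vertices `u` (`0`) and `v` (`1`). -/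
abbrev ThetaVertex (r s t : ℕ) : Type := (Fin r ⊕ (Fin s ⊕ Fin t)) ⊕ Fin 2

/-- The position of a vertex in the numbering used by `thetaGraph`. -/
def thetaVal (r s t : ℕ) : ThetaVertex r s t → ℕ
  | .inl (.inl i) => 1 + i
  | .inl (.inr (.inl i)) => r + 1 + i
  | .inl (.inr (.inr i)) => r + s + 1 + i
  | .inr k => if k = 0 then 0 else r + s + t + 1

theorem thetaVal_lt (r s t : ℕ) (a : ThetaVertex r s t) : thetaVal r s t a < r + s + t + 2 := by
  rcases a with (a | a | a) | a <;> simp only [thetaVal] <;> (try split_ifs) <;> omega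

theorem thetaVal_injective (r s t : ℕ) : Function.Injective (thetaVal r s t) := by
  rintro ((a | a | a) | a) ((b | b | b) | b) <;> simp only [thetaVal] <;> intro h <;>
    first
    | (split_ifs at h <;> omega)
    | (simp only [Sum.inl.injEq, Sum.inr.injEq]; first | omega | (split_ifs at h <;> omega))

/-- The renumbering of the vertices of `thetaGraph r s t` by their role. -/
noncomputable def thetaEquiv (r s t : ℕ) : ThetaVertex r s t ≃ Fin (r + s + t + 2) :=
  Equiv.ofBijective (fun a => ⟨thetaVal r s t a, thetaVal_lt r s t a⟩) <| by
    rw [Fintype.bijective_iff_injective_and_card]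
    refine ⟨fun a b h => thetaVal_injective r s t (Fin.mk.inj h), ?_⟩
    simp [add_assoc]

/-- The block diagonal matrix on the internal vertices with the matrix `f m` on a path with `m`
internal vertices. -/
def thetaInner (f : (m : ℕ) → Matrix (Fin m) (Fin m) ℚ) (r s t : ℕ) :
    Matrix (Fin r ⊕ (Fin s ⊕ Fin t)) (Fin r ⊕ (Fin s ⊕ Fin t)) ℚ :=
  fromBlocks (f r) 0 0 (fromBlocks (f s) 0 0 (f t))

/-- Three families of rows indexed by the internal vertices of the paths, stacked. -/
def thetaStack (f : (m : ℕ) → Matrix (Fin m) (Fin 2) ℚ) (r s t : ℕ) :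
    Matrix (Fin r ⊕ (Fin s ⊕ Fin t)) (Fin 2) ℚ :=
  fromRows (f r) (fromRows (f s) (f t))

set_option maxHeartbeats 2000000 in
/-- Only `t` may vanish, so the lower right block is the edge `uv` present when `t = 0`. -/
theorem adjMatrix_thetaGraph (r s t : ℕ) (hr : r ≠ 0) (hs : s ≠ 0) :
    ((thetaGraph r s t).adjMatrix ℚ).submatrix (thetaEquiv r s t) (thetaEquiv r s t) =
      fromBlocks (thetaInner pathAdj r s t) (thetaStack pathEnds r s t)
        (thetaStack pathEnds r s t)ᵀ
        !![0, if t = 0 then 1 else 0; if t = 0 then 1 else 0, 0] := by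
  ext a b
  have hadj : (thetaGraph r s t).Adj (thetaEquiv r s t a) (thetaEquiv r s t b) ↔ _ :=
    SimpleGraph.fromRel_adj _ _ _
  have hv (a) : ((thetaEquiv r s t a : Fin _) : ℕ) = thetaVal r s t a := rfl
  simp only [ne_eq, Fin.ext_iff, hv, thetaBlockRel] at hadj
  rw [submatrix_apply, adjMatrix_apply, if_congr hadj rfl rfl]
  clear hadj hv
  -- a finite case distinction on the types of the two vertices, decided by linear arithmetic
  rcases a with (⟨a, ha⟩ | ⟨a, ha⟩ | ⟨a, ha⟩) | a <;>
  rcases b with (⟨b, hb⟩ | ⟨b, hb⟩ | ⟨b, hb⟩) | b <;>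
  try fin_cases a
  all_goals try fin_cases b
  all_goals
    simp [thetaVal, thetaInner, thetaStack, pathAdj, pathEnds, hr, hs, -not_and, -not_or]
    try first | omega | (split_ifs <;> first | omega | norm_num)

theorem sum_pathAdj_add_sum_pathEnds (m : ℕ) (i : Fin m) :
    ∑ j, pathAdj m i j + (pathEnds m i 0 + pathEnds m i 1) = 2 := by
  have h := sum_pathAdj_mul m (fun _ => 1) i
  simp only [mul_one] at h
  have := i.2
  rw [h]
  simp only [pathEnds, of_apply, cons_val_zero, cons_val_one]
  split_ifs <;> first | omega | norm_num

theorem sum_pathEnds (m : ℕ) (k : Fin 2) : ∑ i, pathEnds m i k = if m = 0 then 0 else 1 := by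
  fin_cases k
  · simpa [pathEnds, Nat.pos_iff_ne_zero] using sum_fin_ite_eq m 0 fun _ => 1
  · simpa [pathEnds] using sum_fin_ite_succ_eq m m le_rfl fun _ => 1

/-- Internal vertices have degree `2`, branch vertices degree `3`. -/
theorem degree_thetaGraph (r s t : ℕ) (hr : r ≠ 0) (hs : s ≠ 0) (a : ThetaVertex r s t) :
    ((thetaGraph r s t).degree (thetaEquiv r s t a) : ℚ) =
      Sum.elim (fun _ => 2) (fun _ => 3) a := by
  have h (b) : (if (thetaGraph r s t).Adj (thetaEquiv r s t a) (thetaEquiv r s t b) then (1 : ℚ)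
      else 0) = _ := congrFun (congrFun (adjMatrix_thetaGraph r s t hr hs) a) b
  rw [degree_eq_sum_if_adj, ← (thetaEquiv r s t).sum_comp]
  simp only [h]
  rcases a with (a | a | a) | k
  · simpa [thetaInner, thetaStack, Fintype.sum_sum_type] using sum_pathAdj_add_sum_pathEnds r a
  · simpa [thetaInner, thetaStack, Fintype.sum_sum_type] using sum_pathAdj_add_sum_pathEnds s a
  · simpa [thetaInner, thetaStack, Fintype.sum_sum_type] using sum_pathAdj_add_sum_pathEnds t a
  · have h1 : ∑ b : Fin 2, !![(0 : ℚ), if t = 0 then 1 else 0; if t = 0 then 1 else 0, 0] k b =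
        if t = 0 then 1 else 0 := by
      fin_cases k <;> simp
    simp only [Fintype.sum_sum_type, fromBlocks_apply₂₁, fromBlocks_apply₂₂, transpose_apply,
      thetaStack, fromRows_apply_inl, fromRows_apply_inr, sum_pathEnds, h1, hr, hs, if_false,
      Sum.elim_inr]
    split_ifs <;> norm_num

theorem four_sub_lapMatrix_thetaGraph (r s t : ℕ) (hr : r ≠ 0) (hs : s ≠ 0) :
    ((4 : ℚ) • (1 : Matrix (Fin (r + s + t + 2)) (Fin (r + s + t + 2)) ℚ) -
        (thetaGraph r s t).lapMatrix ℚ).submatrix (thetaEquiv r s t) (thetaEquiv r s t) =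
      fromBlocks (thetaInner pathBlock r s t) (thetaStack pathEnds r s t)
        (thetaStack pathEnds r s t)ᵀ
        !![1, if t = 0 then 1 else 0; if t = 0 then 1 else 0, 1] := by
  have hA : thetaInner pathBlock r s t = (2 : ℚ) • 1 + thetaInner pathAdj r s t := by
    simp only [thetaInner, ← fromBlocks_one, fromBlocks_smul, fromBlocks_add, pathBlock,
      smul_zero, add_zero]
  have hD : !![(1 : ℚ), if t = 0 then 1 else 0; if t = 0 then 1 else 0, 1] =
      1 + !![(0 : ℚ), if t = 0 then 1 else 0; if t = 0 then 1 else 0, 0] := by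
    ext i j
    fin_cases i <;> fin_cases j <;> simp
  have hdeg : ((thetaGraph r s t).degMatrix ℚ).submatrix (thetaEquiv r s t) (thetaEquiv r s t) =
      fromBlocks ((2 : ℚ) • 1) 0 0 ((3 : ℚ) • 1) := by
    rw [degMatrix, submatrix_diagonal_equiv]
    have : (fun v => ((thetaGraph r s t).degree v : ℚ)) ∘ thetaEquiv r s t =
        Sum.elim (fun _ => 2) (fun _ => 3) := funext (degree_thetaGraph r s t hr hs)
    rw [this, smul_one_eq_diagonal, smul_one_eq_diagonal, fromBlocks_diagonal]
  rw [lapMatrix, submatrix_sub, submatrix_sub, Pi.sub_apply, Pi.sub_apply, Pi.sub_apply,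
    Pi.sub_apply, hdeg, adjMatrix_thetaGraph r s t hr hs,
    submatrix_smul, Pi.smul_apply, Pi.smul_apply, submatrix_one_equiv, hA, hD, ← fromBlocks_one, fromBlocks_smul]
  ext (i | i) (j | j) <;> simp <;> ring

/-! ### The Schur complement -/

theorem thetaInner_mul_thetaStack (r s t : ℕ) :
    thetaInner pathBlock r s t * thetaStack pathSol r s t = thetaStack pathEnds r s t := by
  simp only [thetaInner, thetaStack, fromBlocks_mul_fromRows, pathBlock_mul_pathSol,
    Matrix.zero_mul, add_zero, zero_add]

theorem det_thetaInner (r s t : ℕ) :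
    (thetaInner pathBlock r s t).det = (r + 1) * ((s + 1) * (t + 1)) := by
  simp only [thetaInner, det_fromBlocks_zero₁₂, det_pathBlock]

theorem thetaStack_transpose_mul (r s t : ℕ) :
    (thetaStack pathEnds r s t)ᵀ * thetaStack pathSol r s t =
      (pathEnds r)ᵀ * pathSol r + ((pathEnds s)ᵀ * pathSol s + (pathEnds t)ᵀ * pathSol t) := by
  simp only [thetaStack, transpose_fromRows, fromCols_mul_fromRows]

/-- Schur complement formula, with the inverse of `A` replaced by a solution of `A * X = B`. -/
theorem det_fromBlocks_of_mul_eq {m n : Type*} [Fintype m] [Fintype n] [DecidableEq m]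
    [DecidableEq n] (A : Matrix m m ℚ) (B : Matrix m n ℚ) (C : Matrix n m ℚ) (D : Matrix n n ℚ)
    (X : Matrix m n ℚ) (h : A * X = B) : (fromBlocks A B C D).det = A.det * (D - C * X).det := by
  have h1 : fromBlocks A B C D * fromBlocks 1 (-X) 0 1 = fromBlocks A 0 C (D - C * X) := by
    rw [fromBlocks_multiply]
    simp [h, sub_eq_neg_add]
  have h2 := congrArg det h1
  rwa [det_mul, det_fromBlocks_zero₂₁, det_one, det_one, mul_one, mul_one,
    det_fromBlocks_zero₁₂] at h2

/-- `det(4·I − L(Θ_{r,s,t})) = 4rst − 2r(1+(−1)^{s+t}) − 2s(1+(−1)^{r+t}) − 2t(1+(−1)^{r+s})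
− 2(1+(−1)^{s+t}+(−1)^{r+t}+(−1)^{r+s})`. -/
theorem det_four_sub_lapMatrix_theta (r s t : ℕ) (hts : t ≤ s) (hsr : s ≤ r)
    (hst : (s, t) ≠ (0, 0)) :
    ((4 : ℚ) • (1 : Matrix (Fin (r + s + t + 2)) (Fin (r + s + t + 2)) ℚ) -
        (thetaGraph r s t).lapMatrix ℚ).det =
      4 * r * s * t - 2 * r * (1 + (-1 : ℚ) ^ (s + t))
        - 2 * s * (1 + (-1 : ℚ) ^ (r + t))
        - 2 * t * (1 + (-1 : ℚ) ^ (r + s))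
        - 2 * (1 + (-1 : ℚ) ^ (s + t) + (-1 : ℚ) ^ (r + t) + (-1 : ℚ) ^ (r + s)) := by
  have hs : s ≠ 0 := by
    rintro rfl
    exact hst (by simpa using hts)
  have hr : r ≠ 0 := by omega
  have e (n : ℕ) : (-1 : ℚ) ^ n * (-1) ^ n = 1 := by simp [← mul_pow]
  have hr' : (r : ℚ) + 1 ≠ 0 := by positivity
  have hs' : (s : ℚ) + 1 ≠ 0 := by positivity
  have ht' : (t : ℚ) + 1 ≠ 0 := by positivity
  rw [← det_submatrix_equiv_self (thetaEquiv r s t), four_sub_lapMatrix_thetaGraph r s t hr hs,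
    det_fromBlocks_of_mul_eq _ _ _ _ _ (thetaInner_mul_thetaStack r s t), det_thetaInner,
    thetaStack_transpose_mul]
  simp only [pathEnds_transpose_mul_pathSol, hr, hs, if_false]
  -- for `t = 0` the edge `uv` supplies the term missing from the third path
  have hoff : (if t = 0 then (1 : ℚ) else 0) - (-((-1) ^ r / ((r : ℚ) + 1)) +
      (-((-1) ^ s / ((s : ℚ) + 1)) + if t = 0 then 0 else -((-1) ^ t / ((t : ℚ) + 1)))) =
      (-1) ^ r / ((r : ℚ) + 1) + (-1) ^ s / ((s : ℚ) + 1) + (-1) ^ t / ((t : ℚ) + 1) := by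
    split_ifs with h
    · subst h
      simp
      ring
    · ring
  simp only [det_fin_two, Matrix.sub_apply, Matrix.add_apply, of_apply, cons_val', cons_val_zero,
    cons_val_one, cons_val_fin_one, hoff]
  have er := e r
  have es := e s
  have et := e t
  simp only [pow_add]
  generalize (-1 : ℚ) ^ r = x at *
  generalize (-1 : ℚ) ^ s = y at *
  generalize (-1 : ℚ) ^ t = z at *
  obtain rfl | rfl := mul_self_eq_one_iff.mp er <;>
  obtain rfl | rfl := mul_self_eq_one_iff.mp es <;>
  obtain rfl | rfl := mul_self_eq_one_iff.mp et <;>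
  · field_simp
    ring
end
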